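/- arXiv:1705.07635 — 2 statements merged into one kernel-verified Lean document; each statement's English description precedes it below -/
import Mathlib

section
/- Under Assumption A (index i = 1 is dominant), the left tail of the sum of correlated lognormals satisfies α(γ) := P(Σᵢ₌₁^N exp(Yᵢ) ≤ γ) ∼ P(exp(Y₁) ≤ γ) = Φ((log γ − μ₁)/√Σ₁₁) as γ → 0, i.e. the ratio of the two sides tends to 1. -/
open MeasureTheory Matrix Real Filter

noncomputable def mvnPdf {n : ℕ} (m : Fin n → ℝ) (S : Matrix (Fin n) (Fin n) ℝ)
    (y : Fin n → ℝ) : ℝ :=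
  Real.exp (-(1/2) * ((y - m) ⬝ᵥ S⁻¹.mulVec (y - m))) / Real.sqrt ((2 * Real.pi) ^ n * S.det)

noncomputable def stdNormCDF (x : ℝ) : ℝ :=
  ∫ t in Set.Iic x, Real.exp (-t ^ 2 / 2) / Real.sqrt (2 * Real.pi)

/-!
Regress every other coordinate on the dominant one: `X j = β j * X 0 + Z j` with `Z` independent of
`X 0`, and Assumption A says exactly that every slope `β j` exceeds `1`. Hence, for a small `κ > 0`,
on the independent events `{X 0 ≤ log γ - γ ^ κ}` and `{∑ exp (Z j) ≤ γ ^ (-κ)}` the remaining terms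
are negligible and the whole sum is at most `γ`. The second event has probability tending to `1`,
while the shift `γ ^ κ` is `o(1 / |log γ|)` and so does not change the asymptotics of the Gaussian
tail: since `Φ` is convex on `(-∞, 0]`, it lies above its tangents there, and these are
controlled by the Mills-type bound `φ t = O(|t| Φ t)`.
-/

open ProbabilityTheory Topology

section StdNormCDF

lemma stdNormCDF_eq_setIntegral_gaussianPDFReal (x : ℝ) :
    stdNormCDF x = ∫ t in Set.Iic x, gaussianPDFReal 0 1 t := by
  simp [stdNormCDF, gaussianPDFReal_def, div_eq_inv_mul]

lemma stdNormCDF_eq_measureReal_Iic (x : ℝ) :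
    stdNormCDF x = (gaussianReal 0 1).real (Set.Iic x) := by
  rw [measureReal_def, gaussianReal_apply_eq_integral 0 one_ne_zero, ENNReal.toReal_ofReal
    (integral_nonneg fun x ↦ gaussianPDFReal_nonneg 0 1 x),
    stdNormCDF_eq_setIntegral_gaussianPDFReal]

lemma monotone_stdNormCDF : Monotone stdNormCDF := fun x y hxy ↦ by
  simpa only [stdNormCDF_eq_measureReal_Iic] using measureReal_mono (Set.Iic_subset_Iic.2 hxy)

lemma stdNormCDF_pos (x : ℝ) : 0 < stdNormCDF x := by
  have := (gaussianReal_absolutelyContinuous' 0 one_ne_zero).isOpenPosMeasure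
  rw [stdNormCDF_eq_measureReal_Iic]
  exact ENNReal.toReal_pos ((isOpen_Iio.measure_pos _ Set.nonempty_Iio).trans_le
    (measure_mono Set.Iio_subset_Iic_self)).ne' (measure_ne_top _ _)

lemma continuous_gaussianPDFReal (μ : ℝ) (v : NNReal) : Continuous (gaussianPDFReal μ v) := by
  unfold gaussianPDFReal
  fun_prop

lemma hasDerivAt_stdNormCDF (x : ℝ) : HasDerivAt stdNormCDF (gaussianPDFReal 0 1 x) x := by
  have hint (s : Set ℝ) : IntegrableOn (gaussianPDFReal 0 1) s :=
    (integrable_gaussianPDFReal 0 1).integrableOn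
  have hsplit (y : ℝ) :
      stdNormCDF y = (∫ t in (0 : ℝ)..y, gaussianPDFReal 0 1 t) + stdNormCDF 0 := by
    simp only [stdNormCDF_eq_setIntegral_gaussianPDFReal]
    rw [← intervalIntegral.integral_Iic_sub_Iic (hint _) (hint _), sub_add_cancel]
  rw [funext hsplit]
  exact ((continuous_gaussianPDFReal 0 1).integral_hasStrictDerivAt 0 x).hasDerivAt.add_const _

lemma monotoneOn_gaussianPDFReal (μ : ℝ) (v : NNReal) :
    MonotoneOn (gaussianPDFReal μ v) (Set.Iic μ) := fun x _ y (hy : y ≤ μ) hxy ↦ by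
  simp only [gaussianPDFReal_def]
  have hsq : (y - μ) ^ 2 ≤ (x - μ) ^ 2 := by nlinarith
  gcongr

lemma convexOn_stdNormCDF : ConvexOn ℝ (Set.Iic 0) stdNormCDF := by
  have hdiff : Differentiable ℝ stdNormCDF := fun x ↦ (hasDerivAt_stdNormCDF x).differentiableAt
  refine MonotoneOn.convexOn_of_deriv (convex_Iic 0) hdiff.continuous.continuousOn
    hdiff.differentiableOn ?_
  rw [funext fun x ↦ (hasDerivAt_stdNormCDF x).deriv]
  exact (monotoneOn_gaussianPDFReal 0 1).mono interior_subset

lemma stdNormCDF_sub_mul_gaussianPDFReal_le {x y : ℝ} (hx : x ≤ 0) (hyx : y ≤ x) :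
    stdNormCDF x - (x - y) * gaussianPDFReal 0 1 x ≤ stdNormCDF y := by
  rcases hyx.eq_or_lt with rfl | hlt
  · simp
  have h := convexOn_stdNormCDF.slope_le_of_hasDerivAt (hyx.trans hx) hx hlt
    (hasDerivAt_stdNormCDF x)
  rw [slope_def_field, div_le_iff₀ (sub_pos.2 hlt)] at h
  linarith

lemma sub_mul_gaussianPDFReal_le_stdNormCDF {x y : ℝ} (hx : x ≤ 0) (hyx : y ≤ x) :
    (x - y) * gaussianPDFReal 0 1 y ≤ stdNormCDF x := by
  rcases hyx.eq_or_lt with rfl | hlt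
  · simpa using (stdNormCDF_pos y).le
  have h := convexOn_stdNormCDF.le_slope_of_hasDerivAt (hyx.trans hx) hx hlt
    (hasDerivAt_stdNormCDF y)
  rw [slope_def_field, le_div_iff₀ (sub_pos.2 hlt)] at h
  linarith [stdNormCDF_pos y]

lemma gaussianPDFReal_le_mul_stdNormCDF {t : ℝ} (ht : t ≤ -1) :
    gaussianPDFReal 0 1 t ≤ rexp (3 / 2) * -t * stdNormCDF t := by
  have ht0 : t < 0 := by linarith
  have hmul : t * t⁻¹ = 1 := mul_inv_cancel₀ ht0.ne
  have hinv : t⁻¹ ≤ 0 := inv_nonpos.2 ht0.le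
  have hinv_sq : t⁻¹ ^ 2 ≤ 1 := by
    rw [inv_pow]
    exact inv_le_one_of_one_le₀ (by nlinarith)
  -- The increment `t⁻¹` is the scale on which the density changes by a bounded factor.
  have hpdf : gaussianPDFReal 0 1 t ≤ rexp (3 / 2) * gaussianPDFReal 0 1 (t + t⁻¹) := by
    simp only [gaussianPDFReal_def, mul_left_comm (rexp (3 / 2)), ← Real.exp_add]
    gcongr
    simp only [sub_zero, NNReal.coe_one]
    linarith [show (t + t⁻¹) ^ 2 = t ^ 2 + 2 * (t * t⁻¹) + t⁻¹ ^ 2 by ring]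
  calc gaussianPDFReal 0 1 t ≤ rexp (3 / 2) * gaussianPDFReal 0 1 (t + t⁻¹) := hpdf
    _ = rexp (3 / 2) * -t * ((t - (t + t⁻¹)) * gaussianPDFReal 0 1 (t + t⁻¹)) := by
      linear_combination -rexp (3 / 2) * gaussianPDFReal 0 1 (t + t⁻¹) * hmul
    _ ≤ rexp (3 / 2) * -t * stdNormCDF t :=
      mul_le_mul_of_nonneg_left (sub_mul_gaussianPDFReal_le_stdNormCDF ht0.le (by linarith))
        (mul_nonneg (Real.exp_pos _).le (by linarith))

lemma tendsto_stdNormCDF_sub_div_stdNormCDF {α : Type*} {l : Filter α} {u δ : α → ℝ}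
    (hu : Tendsto u l atBot) (hδ : ∀ᶠ x in l, 0 ≤ δ x)
    (huδ : Tendsto (fun x ↦ u x * δ x) l (𝓝 0)) :
    Tendsto (fun x ↦ stdNormCDF (u x - δ x) / stdNormCDF (u x)) l (𝓝 1) := by
  have hlower : Tendsto (fun x ↦ 1 + rexp (3 / 2) * (u x * δ x)) l (𝓝 1) := by
    simpa using (huδ.const_mul (rexp (3 / 2))).const_add 1
  refine tendsto_of_tendsto_of_tendsto_of_le_of_le' hlower tendsto_const_nhds ?_ ?_
  · filter_upwards [hu.eventually_le_atBot (-1), hδ] with x hux hδx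
    have htangent : stdNormCDF (u x) - δ x * gaussianPDFReal 0 1 (u x) ≤
        stdNormCDF (u x - δ x) := by
      simpa using stdNormCDF_sub_mul_gaussianPDFReal_le (x := u x) (y := u x - δ x)
        (by linarith) (by linarith)
    have hpdf := mul_le_mul_of_nonneg_left (gaussianPDFReal_le_mul_stdNormCDF hux) hδx
    rw [le_div_iff₀ (stdNormCDF_pos _)]
    linarith
  · filter_upwards [hδ] with x hδx
    exact div_le_one_of_le₀ (monotone_stdNormCDF (sub_le_self _ hδx)) (stdNormCDF_pos _).le

end StdNormCDF

section MultivariateDensity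

open scoped MatrixOrder

/-- The measure on `ℝⁿ` with density `mvnPdf m S`. For positive definite `S` it is the Gaussian law
`𝒩(m, S)`, carried by `Fin n → ℝ` where Mathlib's `multivariateGaussian` lives on
`EuclideanSpace ℝ (Fin n)`. -/
noncomputable def mvnMeasure {n : ℕ} (m : Fin n → ℝ) (S : Matrix (Fin n) (Fin n) ℝ) :
    Measure (Fin n → ℝ) :=
  volume.withDensity fun y ↦ ENNReal.ofReal (mvnPdf m S y)

lemma pi_withDensity_ofReal {ι : Type*} [Fintype ι] {α : ι → Type*}
    [∀ i, MeasurableSpace (α i)] (μ : ∀ i, Measure (α i)) [∀ i, SigmaFinite (μ i)]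
    {f : ∀ i, α i → ℝ} (hf : ∀ i, Integrable (f i) (μ i)) (hf0 : ∀ i x, 0 ≤ f i x) :
    Measure.pi (fun i ↦ (μ i).withDensity fun x ↦ ENNReal.ofReal (f i x)) =
      (Measure.pi μ).withDensity fun x ↦ ENNReal.ofReal (∏ i, f i (x i)) := by
  have (i : ι) : IsFiniteMeasure ((μ i).withDensity fun x ↦ ENNReal.ofReal (f i x)) :=
    isFiniteMeasure_withDensity_ofReal (hf i).hasFiniteIntegral
  refine Measure.pi_eq fun s hs ↦ ?_
  have hfs (i : ι) : Integrable (f i) ((μ i).restrict (s i)) := (hf i).integrableOn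
  rw [withDensity_apply _ (MeasurableSet.univ_pi hs), Measure.restrict_pi_pi,
    ← ofReal_integral_eq_lintegral_ofReal (Integrable.fintype_prod_dep hfs)
      (.of_forall fun x ↦ Finset.prod_nonneg fun i _ ↦ hf0 i (x i)),
    integral_fintype_prod_eq_prod,
    ENNReal.ofReal_prod_of_nonneg fun i _ ↦ integral_nonneg (hf0 i)]
  refine Finset.prod_congr rfl fun i _ ↦ ?_
  rw [withDensity_apply _ (hs i),
    ofReal_integral_eq_lintegral_ofReal (hfs i) (.of_forall (hf0 i))]

variable {n : ℕ} (m : Fin n → ℝ) (S : Matrix (Fin n) (Fin n) ℝ)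

lemma mvnPdf_nonneg (y : Fin n → ℝ) : 0 ≤ mvnPdf m S y := by
  unfold mvnPdf
  positivity

lemma continuous_mvnPdf : Continuous (mvnPdf m S) := by
  unfold mvnPdf
  fun_prop

lemma setIntegral_mvnPdf (s : Set (Fin n → ℝ)) :
    ∫ y in s, mvnPdf m S y = (mvnMeasure m S).real s := by
  rw [integral_eq_lintegral_of_nonneg_ae (.of_forall (mvnPdf_nonneg m S))
    (continuous_mvnPdf m S).aestronglyMeasurable, ← withDensity_apply', mvnMeasure,
    measureReal_def]

lemma mvnPdf_zero_one (x : Fin n → ℝ) : mvnPdf 0 1 x = ∏ i, gaussianPDFReal 0 1 (x i) := by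
  have hquad : x ⬝ᵥ x = ∑ i, x i ^ 2 := by simp only [dotProduct, sq]
  have hsqrt : √((2 * π) ^ n) = √(2 * π) ^ n := by
    rw [Real.sqrt_eq_rpow, Real.sqrt_eq_rpow, Real.rpow_pow_comm (by positivity)]
  simp only [mvnPdf, inv_one, one_mulVec, sub_zero, det_one, mul_one, hquad, hsqrt,
    gaussianPDFReal_def, NNReal.coe_one, Finset.prod_mul_distrib, Finset.prod_const,
    Finset.card_univ, Fintype.card_fin, ← Real.exp_sum, ← Finset.sum_div, Finset.sum_neg_distrib,
    inv_pow]
  rw [div_eq_inv_mul, neg_mul, neg_div, one_div, div_eq_inv_mul]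

lemma mvnMeasure_zero_one :
    mvnMeasure (0 : Fin n → ℝ) 1 = Measure.pi fun _ ↦ gaussianReal 0 1 := by
  simp only [mvnMeasure, mvnPdf_zero_one, gaussianReal_of_var_ne_zero 0 one_ne_zero, volume_pi]
  exact (pi_withDensity_ofReal _ (fun _ ↦ integrable_gaussianPDFReal 0 1)
    fun _ ↦ gaussianPDFReal_nonneg 0 1).symm

lemma mvnPdf_affine (b : Fin n → ℝ) {A : Matrix (Fin n) (Fin n) ℝ} (hA : A.det ≠ 0)
    (x : Fin n → ℝ) :
    |A.det| * mvnPdf (b + A *ᵥ m) (A * S * Aᵀ) (b + A *ᵥ x) = mvnPdf m S x := by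
  have hquad (v : Fin n → ℝ) : (A *ᵥ v) ⬝ᵥ (A * S * Aᵀ)⁻¹ *ᵥ (A *ᵥ v) = v ⬝ᵥ S⁻¹ *ᵥ v := by
    have hinv : (A * S * Aᵀ)⁻¹ *ᵥ (A *ᵥ v) = A⁻¹ᵀ *ᵥ (S⁻¹ *ᵥ v) := by
      rw [Matrix.mul_inv_rev, Matrix.mul_inv_rev, transpose_nonsing_inv, mulVec_mulVec,
        mulVec_mulVec, Matrix.mul_assoc, Matrix.mul_assoc, nonsing_inv_mul A hA.isUnit,
        Matrix.mul_one]
    rw [hinv, dotProduct_mulVec, vecMul_transpose, mulVec_mulVec, nonsing_inv_mul A hA.isUnit,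
      one_mulVec]
  have hdet : √((2 * π) ^ n * (A * S * Aᵀ).det) = |A.det| * √((2 * π) ^ n * S.det) := by
    rw [← Real.sqrt_sq_eq_abs, ← Real.sqrt_mul (sq_nonneg _), det_mul, det_mul, det_transpose]
    ring_nf
  rw [mvnPdf, add_sub_add_left_eq_sub, ← mulVec_sub, hquad, hdet, mvnPdf]
  field_simp [abs_ne_zero.2 hA]

lemma map_affine_volume (b : Fin n → ℝ) {A : Matrix (Fin n) (Fin n) ℝ} (hA : A.det ≠ 0) :
    volume.map (fun x ↦ b + A *ᵥ x) = ENNReal.ofReal |A.det⁻¹| • volume := by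
  have hcomp : (fun x ↦ b + A *ᵥ x) = (b + ·) ∘ toLin' A := by
    ext
    simp
  rw [hcomp, ← Measure.map_map (by fun_prop) (by fun_prop),
    Real.map_matrix_volume_pi_eq_smul_volume_pi hA, Measure.map_smul, map_add_left_eq_self]

lemma map_affine_mvnMeasure (b : Fin n → ℝ) {A : Matrix (Fin n) (Fin n) ℝ} (hA : A.det ≠ 0) :
    (mvnMeasure m S).map (fun x ↦ b + A *ᵥ x) = mvnMeasure (b + A *ᵥ m) (A * S * Aᵀ) := by
  have hmeas : Measurable fun x ↦ b + A *ᵥ x := by fun_prop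
  have hpdf : Measurable fun y ↦ ENNReal.ofReal (mvnPdf (b + A *ᵥ m) (A * S * Aᵀ) y) :=
    (continuous_mvnPdf _ _).measurable.ennreal_ofReal
  have hpdf_comp : Measurable fun x ↦
      ENNReal.ofReal (mvnPdf (b + A *ᵥ m) (A * S * Aᵀ) (b + A *ᵥ x)) := hpdf.comp hmeas
  ext s hs
  rw [Measure.map_apply hmeas hs, mvnMeasure, mvnMeasure, withDensity_apply _ (hmeas hs),
    withDensity_apply _ hs]
  simp_rw [← mvnPdf_affine m S b hA, ENNReal.ofReal_mul (abs_nonneg A.det)]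
  rw [lintegral_const_mul _ hpdf_comp, ← setLIntegral_map hs hpdf hmeas,
    map_affine_volume b hA, Measure.restrict_smul, lintegral_smul_measure, smul_eq_mul, ← mul_assoc,
    ← ENNReal.ofReal_mul (abs_nonneg _), ← abs_mul, mul_inv_cancel₀ hA, abs_one,
    ENNReal.ofReal_one, one_mul]

variable {S}

lemma map_ofLp_multivariateGaussian (hS : S.PosDef) :
    (multivariateGaussian (WithLp.toLp 2 m) S).map WithLp.ofLp = mvnMeasure m S := by
  set A := CFC.sqrt S
  have hsq : A * A = S := CFC.sqrt_mul_sqrt_self S hS.posSemidef.nonneg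
  have hAT : Aᵀ = A := by simpa using! (CFC.sqrt_nonneg S).isSelfAdjoint.star_eq
  have hdet : A.det ≠ 0 := fun h ↦ hS.det_pos.ne' (by rw [← hsq, det_mul, h, zero_mul])
  calc (multivariateGaussian (WithLp.toLp 2 m) S).map WithLp.ofLp
      = (Measure.pi fun _ ↦ gaussianReal 0 1).map (fun x ↦ m + A *ᵥ x) := by
        rw [multivariateGaussian, ← map_pi_eq_stdGaussian, Measure.map_map (by fun_prop)
          (by fun_prop), Measure.map_map (by fun_prop) (by fun_prop)]
        rfl
    _ = mvnMeasure m S := by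
        rw [← mvnMeasure_zero_one, map_affine_mvnMeasure _ _ _ hdet, mulVec_zero, add_zero,
          Matrix.mul_one, hAT, hsq]

lemma hasGaussianLaw_id_mvnMeasure (hS : S.PosDef) : HasGaussianLaw id (mvnMeasure m S) := by
  rw [← map_ofLp_multivariateGaussian m hS]
  exact (IsGaussian.hasGaussianLaw_id.map_equiv
    (EuclideanSpace.equiv (Fin n) ℝ)).isGaussian_map.hasGaussianLaw_id

lemma integral_eval_mvnMeasure (hS : S.PosDef) (i : Fin n) : ∫ y, y i ∂mvnMeasure m S = m i := by
  have hlaw := measurePreserving_eval_multivariateGaussian (μ := WithLp.toLp 2 m)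
    hS.posSemidef (i := i)
  rw [← map_ofLp_multivariateGaussian m hS, integral_map (f := fun y : Fin n → ℝ ↦ y i)
    (by fun_prop) (measurable_pi_apply i).aestronglyMeasurable]
  exact hlaw.hasLaw.integral_eq.trans integral_id_gaussianReal

lemma covariance_eval_mvnMeasure (hS : S.PosDef) (i j : Fin n) :
    cov[fun y ↦ y i, fun y ↦ y j; mvnMeasure m S] = S i j := by
  rw [← map_ofLp_multivariateGaussian m hS, covariance_map_fun
    (measurable_pi_apply i).aestronglyMeasurable (measurable_pi_apply j).aestronglyMeasurable
    (by fun_prop)]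
  exact covariance_eval_multivariateGaussian hS.posSemidef i j

lemma variance_eval_mvnMeasure (hS : S.PosDef) (i : Fin n) :
    Var[fun y ↦ y i; mvnMeasure m S] = S i i := by
  rw [← covariance_self (measurable_pi_apply i).aemeasurable, covariance_eval_mvnMeasure m hS]

end MultivariateDensity

section DominantVariable

variable {Ω ι : Type*} {mΩ : MeasurableSpace Ω} {P : Measure Ω}

lemma measureReal_setOf_le_eq_stdNormCDF {X : Ω → ℝ} (hX : HasGaussianLaw X P)
    (hvar : 0 < Var[X; P]) (a : ℝ) :
    P.real {ω | X ω ≤ a} = stdNormCDF ((a - P[X]) / √Var[X; P]) := by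
  have hσ : 0 < √Var[X; P] := Real.sqrt_pos.2 hvar
  have hstd : HasLaw (fun ω ↦ (X ω - P[X]) / √Var[X; P]) (gaussianReal 0 1) P := by
    convert gaussianReal_div_const (gaussianReal_sub_const ⟨hX.aemeasurable,
      hX.map_eq_gaussianReal⟩ P[X]) √Var[X; P] using 2
    · simp
    · ext
      simp [hvar.le, hvar.ne']
  rw [stdNormCDF_eq_measureReal_Iic, ← hstd.map_eq,
    map_measureReal_apply_of_aemeasurable hstd.aemeasurable measurableSet_Iic]
  simp only [Set.preimage, Set.mem_Iic, div_le_div_iff_of_pos_right hσ, sub_le_sub_iff_right]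

lemma tendsto_measureReal_setOf_le_atTop [IsProbabilityMeasure P] (W : Ω → ℝ) :
    Tendsto (fun t ↦ P.real {ω | W ω ≤ t}) atTop (𝓝 1) := by
  have hmono : Monotone fun t : ℝ ↦ {ω | W ω ≤ t} := fun s t hst ω hω ↦ le_trans hω hst
  have hunion : ⋃ t : ℝ, {ω | W ω ≤ t} = Set.univ :=
    Set.iUnion_eq_univ_iff.2 fun ω ↦ ⟨W ω, le_refl (W ω)⟩
  have h := tendsto_measure_iUnion_atTop (μ := P) hmono
  rw [hunion, measure_univ] at h
  exact (ENNReal.tendsto_toReal ENNReal.one_ne_top).comp h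

lemma exp_add_sum_exp_le [Fintype ι] {x L κ : ℝ} {z β : ι → ℝ} (hκ : 0 < κ) (hL : L ≤ 0)
    (hβ : ∀ j, 1 + 2 * κ ≤ β j) (hx : x ≤ L - rexp (κ * L))
    (hz : ∑ j, rexp (z j) ≤ rexp (-(κ * L))) :
    rexp x + ∑ j, rexp (β j * x + z j) ≤ rexp L := by
  have hxL : x ≤ L := by linarith [Real.exp_pos (κ * L)]
  have hexponent (j : ι) : β j * x ≤ x + 2 * (κ * L) := by nlinarith [hβ j]
  have hrest : ∑ j, rexp (β j * x + z j) ≤ rexp x * rexp (κ * L) := by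
    calc ∑ j, rexp (β j * x + z j) ≤ ∑ j, rexp (x + 2 * (κ * L)) * rexp (z j) := by
          gcongr with j
          rw [← Real.exp_add]
          gcongr
          exact hexponent j
      _ ≤ rexp (x + 2 * (κ * L)) * rexp (-(κ * L)) := by
          rw [← Finset.mul_sum]
          gcongr
      _ = rexp x * rexp (κ * L) := by
          rw [← Real.exp_add, ← Real.exp_add]
          ring_nf
  calc rexp x + ∑ j, rexp (β j * x + z j) ≤ rexp x * (rexp (κ * L) + 1) := by linarith
    _ ≤ rexp x * rexp (rexp (κ * L)) := by
        gcongr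
        exact Real.add_one_le_exp _
    _ ≤ rexp L := by
        rw [← Real.exp_add]
        gcongr
        linarith

lemma exists_pos_forall_one_add_two_mul_le [Finite ι] {β : ι → ℝ} (hβ : ∀ j, 1 < β j) :
    ∃ κ > 0, ∀ j, 1 + 2 * κ ≤ β j := by
  obtain ⟨b, hb, hbβ⟩ := (Set.finite_singleton (1 : ℝ)).exists_between' (Set.finite_range β)
    (by simpa using hβ)
  simp only [Set.mem_singleton_iff, forall_eq, Set.forall_mem_range] at hb hbβ
  exact ⟨(b - 1) / 2, by linarith, fun j ↦ by linarith [hbβ j]⟩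

lemma measureReal_mul_measureReal_le_measureReal_exp_add_sum_exp_le [Fintype ι]
    [IsFiniteMeasure P] {X : Ω → ℝ} {Z : Ω → ι → ℝ} (hXZ : X ⟂ᵢ[P] Z) {β : ι → ℝ} {κ L : ℝ}
    (hκ : 0 < κ) (hL : L ≤ 0) (hβ : ∀ j, 1 + 2 * κ ≤ β j) :
    P.real {ω | X ω ≤ L - rexp (κ * L)} * P.real {ω | ∑ j, rexp (Z ω j) ≤ rexp (-(κ * L))} ≤
      P.real {ω | rexp (X ω) + ∑ j, rexp (β j * X ω + Z ω j) ≤ rexp L} := by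
  have hmeas : Measurable fun z : ι → ℝ ↦ ∑ j, rexp (z j) := by fun_prop
  have hindep := hXZ.measure_inter_preimage_eq_mul (Set.Iic (L - rexp (κ * L)))
    {z | ∑ j, rexp (z j) ≤ rexp (-(κ * L))} measurableSet_Iic (hmeas measurableSet_Iic)
  calc P.real {ω | X ω ≤ L - rexp (κ * L)} * P.real {ω | ∑ j, rexp (Z ω j) ≤ rexp (-(κ * L))}
      = P.real ({ω | X ω ≤ L - rexp (κ * L)} ∩ {ω | ∑ j, rexp (Z ω j) ≤ rexp (-(κ * L))}) :=
        (ENNReal.toReal_mul.symm.trans (congrArg ENNReal.toReal hindep.symm))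
    _ ≤ _ := measureReal_mono fun ω hω ↦ exp_add_sum_exp_le hκ hL hβ hω.1 hω.2

lemma tendsto_mul_exp_mul_atBot {κ : ℝ} (hκ : 0 < κ) :
    Tendsto (fun x ↦ x * rexp (κ * x)) atBot (𝓝 0) := by
  have hneg : Tendsto (fun x ↦ -(κ * x)) atBot atTop :=
    tendsto_neg_atBot_atTop.comp (tendsto_id.const_mul_atBot hκ)
  have h := ((Real.tendsto_pow_mul_exp_neg_atTop_nhds_zero 1).comp hneg).const_mul (-κ⁻¹)
  rw [mul_zero] at h
  refine h.congr fun x ↦ ?_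
  simp only [Function.comp_apply, pow_one, neg_neg]
  field_simp

lemma tendsto_stdNormCDF_sub_exp_div_stdNormCDF (μ : ℝ) {σ κ : ℝ} (hσ : 0 < σ) (hκ : 0 < κ) :
    Tendsto (fun L ↦ stdNormCDF ((L - rexp (κ * L) - μ) / σ) / stdNormCDF ((L - μ) / σ))
      atBot (𝓝 1) := by
  have hu : Tendsto (fun L ↦ (L - μ) / σ) atBot atBot :=
    (tendsto_atBot_add_const_right _ (-μ) tendsto_id).atBot_div_const hσ
  have hexp : Tendsto (fun L ↦ rexp (κ * L)) atBot (𝓝 0) :=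
    Real.tendsto_exp_atBot.comp (tendsto_id.const_mul_atBot hκ)
  have hprod : Tendsto (fun L ↦ (L - μ) / σ * (rexp (κ * L) / σ)) atBot (𝓝 0) := by
    have h := ((tendsto_mul_exp_mul_atBot hκ).sub (hexp.const_mul μ)).div_const (σ * σ)
    rw [mul_zero, sub_zero, zero_div] at h
    exact h.congr fun L ↦ by rw [div_mul_div_comm, sub_mul]
  refine (tendsto_stdNormCDF_sub_div_stdNormCDF hu (.of_forall fun L ↦ by positivity)
    hprod).congr fun L ↦ ?_
  rw [← sub_div, sub_right_comm]

lemma tendsto_measureReal_exp_add_sum_exp_le_div_stdNormCDF [Fintype ι] {X : Ω → ℝ}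
    {Z : Ω → ι → ℝ} {β : ι → ℝ} (hX : HasGaussianLaw X P) (hvar : 0 < Var[X; P])
    (hXZ : X ⟂ᵢ[P] Z) (hβ : ∀ j, 1 < β j) :
    Tendsto (fun L ↦ P.real {ω | rexp (X ω) + ∑ j, rexp (β j * X ω + Z ω j) ≤ rexp L} /
      stdNormCDF ((L - P[X]) / √Var[X; P])) atBot (𝓝 1) := by
  have := hX.isProbabilityMeasure
  obtain ⟨κ, hκ, hκβ⟩ := exists_pos_forall_one_add_two_mul_le hβ
  have hshift := tendsto_stdNormCDF_sub_exp_div_stdNormCDF P[X] (Real.sqrt_pos.2 hvar) hκ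
  have hrest : Tendsto (fun L ↦ P.real {ω | ∑ j, rexp (Z ω j) ≤ rexp (-(κ * L))}) atBot (𝓝 1) :=
    (tendsto_measureReal_setOf_le_atTop _).comp (Real.tendsto_exp_atTop.comp
      (tendsto_neg_atBot_atTop.comp (tendsto_id.const_mul_atBot hκ)))
  have hlower := hshift.mul hrest
  rw [one_mul] at hlower
  refine tendsto_of_tendsto_of_tendsto_of_le_of_le' hlower tendsto_const_nhds ?_ ?_
  · filter_upwards [eventually_le_atBot 0] with L hL
    rw [div_mul_eq_mul_div, ← measureReal_setOf_le_eq_stdNormCDF hX hvar]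
    exact div_le_div_of_nonneg_right
      (measureReal_mul_measureReal_le_measureReal_exp_add_sum_exp_le hXZ hκ hL hκβ)
      (stdNormCDF_pos _).le
  · refine .of_forall fun L ↦ div_le_one_of_le₀ ?_ (stdNormCDF_pos _).le
    rw [← measureReal_setOf_le_eq_stdNormCDF hX hvar]
    refine measureReal_mono fun ω (hω : _ ≤ _) ↦ Real.exp_le_exp.1 (le_trans ?_ hω)
    exact le_add_of_nonneg_right (Finset.sum_nonneg fun j _ ↦ (Real.exp_pos _).le)

/-- The slope of the linear regression of `Y` on `X`, for which `Y - regressionCoeff X Y P * X` is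
uncorrelated with `X`. It is `0` when `X` has variance `0`. -/
noncomputable def regressionCoeff (X Y : Ω → ℝ) (P : Measure Ω) : ℝ :=
  cov[X, Y; P] / Var[X; P]

lemma covariance_sub_regressionCoeff_mul [IsFiniteMeasure P] {X Y : Ω → ℝ} (hX : MemLp X 2 P)
    (hY : MemLp Y 2 P) (hvar : Var[X; P] ≠ 0) :
    cov[X, fun ω ↦ Y ω - regressionCoeff X Y P * X ω; P] = 0 := by
  rw [covariance_fun_sub_right hX hY (hX.const_mul _), covariance_const_mul_right,
    covariance_self hX.aemeasurable, regressionCoeff, div_mul_cancel₀ _ hvar, sub_self]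

lemma indepFun_sub_regressionCoeff_mul [Finite ι] {X : Ω → ℝ} {Y : ι → Ω → ℝ}
    (hXY : HasGaussianLaw (fun ω ↦ (X ω, (Y · ω))) P) (hvar : Var[X; P] ≠ 0) :
    X ⟂ᵢ[P] fun ω j ↦ Y j ω - regressionCoeff X (Y j) P * X ω := by
  have := hXY.isProbabilityMeasure
  have := Fintype.ofFinite ι
  have hlaw : HasGaussianLaw
      (fun ω ↦ ((fun _ : Unit ↦ X ω), (fun j ↦ Y j ω - regressionCoeff X (Y j) P * X ω))) P := by
    let x : ℝ × (ι → ℝ) →L[ℝ] ℝ := ContinuousLinearMap.fst ℝ ℝ (ι → ℝ)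
    let y (j : ι) : ℝ × (ι → ℝ) →L[ℝ] ℝ :=
      ContinuousLinearMap.proj j ∘L ContinuousLinearMap.snd ℝ ℝ (ι → ℝ)
    exact hXY.map_fun ((ContinuousLinearMap.pi fun _ : Unit ↦ x).prod
      (ContinuousLinearMap.pi fun j ↦ y j - regressionCoeff X (Y j) P • x))
  have hindep := hlaw.indepFun_of_covariance_eval fun _ j ↦
    covariance_sub_regressionCoeff_mul hXY.fst.memLp_two (hXY.snd.eval j).memLp_two hvar
  exact hindep.comp (φ := fun x : Unit → ℝ ↦ x ()) (measurable_pi_apply _) measurable_id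

end DominantVariable

lemma sqrt_lt_div_sqrt_mul_mul_sqrt_iff {a b c : ℝ} (ha : 0 < a) (hc : 0 < c) :
    √a < b / √(a * c) * √c ↔ a < b := by
  rw [Real.sqrt_mul ha.le, div_mul_eq_mul_div, mul_div_mul_right _ _ (Real.sqrt_pos.2 hc).ne',
    lt_div_iff₀ (Real.sqrt_pos.2 ha), Real.mul_self_sqrt ha.le]

theorem stmt9_general {Ω ι : Type*} [Fintype ι] {mΩ : MeasurableSpace Ω} {P : Measure Ω}
    {X : ι → Ω → ℝ} (hX : HasGaussianLaw (fun ω ↦ (X · ω)) P) {i : ι} (hvar : 0 < Var[X i; P])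
    (hcov : ∀ j ≠ i, Var[X i; P] < cov[X i, X j; P]) :
    (∀ γ : ℝ, 0 < γ → P.real {ω | rexp (X i ω) ≤ γ} =
      stdNormCDF ((Real.log γ - P[X i]) / √Var[X i; P])) ∧
    Tendsto (fun γ : ℝ ↦ P.real {ω | ∑ j, rexp (X j ω) ≤ γ} /
      stdNormCDF ((Real.log γ - P[X i]) / √Var[X i; P])) (𝓝[>] 0) (𝓝 1) := by
  classical
  refine ⟨fun γ hγ ↦ ?_, ?_⟩
  · simpa only [Real.le_log_iff_exp_le hγ] using
      measureReal_setOf_le_eq_stdNormCDF (hX.eval i) hvar (Real.log γ)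
  have hlaw : HasGaussianLaw (fun ω ↦ (X i ω, fun j : {j // j ≠ i} ↦ X j ω)) P :=
    hX.map_fun ((ContinuousLinearMap.proj i).prod
      (ContinuousLinearMap.pi fun j : {j // j ≠ i} ↦ ContinuousLinearMap.proj j.1))
  have hcoeff (j : {j // j ≠ i}) : 1 < regressionCoeff (X i) (X j) P :=
    (one_lt_div hvar).2 (hcov j j.2)
  refine ((tendsto_measureReal_exp_add_sum_exp_le_div_stdNormCDF (hX.eval i) hvar
    (indepFun_sub_regressionCoeff_mul hlaw hvar.ne') hcoeff).comp
      Real.tendsto_log_nhdsGT_zero).congr' ?_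
  filter_upwards [self_mem_nhdsWithin] with γ hγ
  simp only [Function.comp_apply, add_sub_cancel, Real.exp_log hγ,
    Fintype.sum_eq_add_sum_subtype_ne _ i]

theorem stmt9 {n : ℕ} (m : Fin (n + 1) → ℝ) (S : Matrix (Fin (n + 1)) (Fin (n + 1)) ℝ)
    (hS : S.PosDef)
    (hA : ∀ j : Fin (n + 1), j ≠ 0 →
      Real.sqrt (S 0 0) < S 0 j / Real.sqrt (S 0 0 * S j j) * Real.sqrt (S j j)) :
    (∀ γ : ℝ, 0 < γ →
      (∫ y in {y : Fin (n + 1) → ℝ | Real.exp (y 0) ≤ γ}, mvnPdf m S y) =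
        stdNormCDF ((Real.log γ - m 0) / Real.sqrt (S 0 0))) ∧
    Filter.Tendsto
      (fun γ : ℝ =>
        (∫ y in {y : Fin (n + 1) → ℝ | ∑ i, Real.exp (y i) ≤ γ}, mvnPdf m S y) /
          stdNormCDF ((Real.log γ - m 0) / Real.sqrt (S 0 0)))
      (nhdsWithin 0 (Set.Ioi 0)) (nhds 1) := by
  have h := stmt9_general (X := fun (i : Fin (n + 1)) (y : Fin (n + 1) → ℝ) ↦ y i) (i := 0)
    (hasGaussianLaw_id_mvnMeasure m hS)
    (by simpa only [variance_eval_mvnMeasure m hS] using hS.diag_pos) fun j hj ↦ by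
      simpa only [variance_eval_mvnMeasure m hS, covariance_eval_mvnMeasure m hS] using
        (sqrt_lt_div_sqrt_mul_mul_sqrt_iff hS.diag_pos hS.diag_pos).1 (hA j hj)
  simpa only [variance_eval_mvnMeasure m hS, integral_eval_mvnMeasure m hS,
    setIntegral_mvnPdf m S] using h
end

section
/- Proposition 1 (part 2): Under Assumption A, the correlation coefficient ρ between T(Y) and Z(Y) under the mean-shifted measure g tends to 1 as γ → 0. -/
open MeasureTheory Matrix Real Filter

/-!
Put `e = m 0 - log γ`. At depth `e` below the mean the coordinate `0` fluctuates on the scale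
`1 / e` while the regression residuals of the other coordinates keep theirs, so in the coordinates
of `regressionMap` a Gaussian integral over the tail is an explicit exponential in `e` times a
Laplace integral over a half space. Assumption A says that all regression coefficients exceed `1`:
deep in the tail the other exponentials are negligible, and `{∑ i, exp (y i) ≤ γ}` has the same
limit in these coordinates, hence the same asymptotic constants, as `{exp (y 0) ≤ γ}`.

For the mean shift in question, `f ^ 2 / g` is a constant multiple of the Gaussian density shifted
the opposite way, so second moments obey the same asymptotics. The second moments of the two
estimators therefore have ratio tending to `1`, and the squared means are smaller by a factor of
order `1 / e`; since the product of the estimators is integrated over the smaller set, its moment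
is the second moment of `T`, and the correlation tends to `1`.
-/

open Topology

section Matrix

variable {ι : Type*} [Fintype ι]

open scoped MatrixOrder Matrix.Norms.L2Operator in
lemma exists_pos_mul_dotProduct_self_le {Q : Matrix ι ι ℝ} (hQ : Q.PosDef) :
    ∃ c > 0, ∀ v : ι → ℝ, c * (v ⬝ᵥ v) ≤ v ⬝ᵥ Q *ᵥ v := by
  classical
  rcases isEmpty_or_nonempty ι
  · exact ⟨1, one_pos, by simp⟩
  have hpos : IsStrictlyPositive Q := hQ.isStrictlyPositive
  obtain ⟨c, hc, hle⟩ := (CFC.exists_pos_algebraMap_le_iff hpos.isSelfAdjoint).2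
    fun x hx => hpos.spectrum_pos hx
  refine ⟨c, hc, fun v => ?_⟩
  simpa [Algebra.algebraMap_eq_smul_one, sub_mulVec, smul_mulVec]
    using (Matrix.le_iff.1 hle).dotProduct_mulVec_nonneg v

variable [DecidableEq ι]

lemma det_one_updateCol {R : Type*} [CommRing R] (i : ι) (b : ι → R) :
    ((1 : Matrix ι ι R).updateCol i b).det = b i := by
  rw [← cramer_apply, cramer_one, Module.End.one_apply]

lemma one_updateCol_mulVec {R : Type*} [CommRing R] (i : ι) (b z : ι → R) :
    (1 : Matrix ι ι R).updateCol i b *ᵥ z = z i • b + Function.update z i 0 := by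
  have hM : (1 : Matrix ι ι R).updateCol i b =
      1 + vecMulVec (b - Pi.single i 1) (Pi.single i 1) := by
    ext j k
    rcases eq_or_ne k i with rfl | hk <;> simp [vecMulVec_apply, Pi.single_apply, one_apply, *]
  have hz : Function.update z i 0 = z - z i • Pi.single i 1 := by
    ext j
    rcases eq_or_ne j i with rfl | hj <;> simp [*]
  rw [hM, hz, add_mulVec, one_mulVec, vecMulVec_mulVec, single_one_dotProduct, op_smul_eq_smul]
  module

lemma setIntegral_eq_abs_det_smul_setIntegral_add_mulVec {E : Type*} [NormedAddCommGroup E]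
    [NormedSpace ℝ E] {M : Matrix ι ι ℝ} (hM : M.det ≠ 0) (c : ι → ℝ) (F : (ι → ℝ) → E)
    (D : Set (ι → ℝ)) :
    ∫ y in D, F y = |M.det| • ∫ z in (fun z => c + M *ᵥ z) ⁻¹' D, F (c + M *ᵥ z) := by
  have hlin : MeasurableEmbedding M.toLin' :=
    (LinearMap.continuous_of_finiteDimensional _).measurableEmbedding
      (mulVec_injective_iff_isUnit.2 ((isUnit_iff_isUnit_det M).2 hM.isUnit))
  have hemb : MeasurableEmbedding fun z => c + M *ᵥ z := (measurableEmbedding_addLeft c).comp hlin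
  have hmap : Measure.map (fun z => c + M *ᵥ z) volume = ENNReal.ofReal |M.det⁻¹| • volume := by
    rw [show (fun z => c + M *ᵥ z) = (c + ·) ∘ M.toLin' from rfl,
      ← Measure.map_map (measurable_const_add c) hlin.measurable,
      Real.map_matrix_volume_pi_eq_smul_volume_pi hM, Measure.map_smul, map_add_left_eq_self]
  rw [← hemb.setIntegral_map F D, hmap, Measure.restrict_smul, integral_smul_measure,
    ENNReal.toReal_ofReal (abs_nonneg _), abs_inv, smul_inv_smul₀ (abs_ne_zero.2 hM)]

end Matrix

section TailKernel

variable {ι : Type*} [Fintype ι] [DecidableEq ι] {Q : Matrix ι ι ℝ} {i : ι} {κ δ : ℝ}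

/-- The Laplace kernel of a Gaussian tail: exponential with rate `κ` in the coordinate `i`, with a
quadratic correction of size `δ`, and Gaussian with precision matrix `Q` in the other
coordinates. -/
noncomputable def tailKernel (Q : Matrix ι ι ℝ) (i : ι) (κ δ : ℝ) (z : ι → ℝ) : ℝ :=
  Real.exp (-κ * z i - δ * z i ^ 2 - Function.update z i 0 ⬝ᵥ Q *ᵥ Function.update z i 0 / 2)

lemma tailKernel_pos (z : ι → ℝ) : 0 < tailKernel Q i κ δ z :=
  Real.exp_pos _

lemma continuous_tailKernel : Continuous (tailKernel Q i κ δ) := by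
  unfold tailKernel
  fun_prop

lemma tendsto_tailKernel_zero {α : Type*} {l : Filter α} {d : α → ℝ} (hd : Tendsto d l (𝓝 0))
    (z : ι → ℝ) : Tendsto (fun a => tailKernel Q i κ (d a) z) l (𝓝 (tailKernel Q i κ 0 z)) := by
  have hcont : Continuous fun δ => tailKernel Q i κ δ z := by
    unfold tailKernel
    fun_prop
  exact (hcont.tendsto 0).comp hd

lemma tailKernel_le_tailKernel_zero (hδ : 0 ≤ δ) (z : ι → ℝ) :
    tailKernel Q i κ δ z ≤ tailKernel Q i κ 0 z := by
  unfold tailKernel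
  gcongr

lemma integrableOn_tailKernel_zero (hQ : Q.PosDef) (hκ : 0 < κ) :
    IntegrableOn (tailKernel Q i κ 0) {z | 0 ≤ z i} := by
  obtain ⟨c, hc, hle⟩ := exists_pos_mul_dotProduct_self_le hQ
  let h : ι → ℝ → ℝ := Function.update (fun _ t => Real.exp (-(c / 2) * t ^ 2)) i
    ((Set.Ici 0).indicator fun t => Real.exp (-κ * t))
  have hint : Integrable fun z : ι → ℝ => ∏ j, h j (z j) := by
    refine Integrable.fintype_prod fun j => ?_
    rcases eq_or_ne j i with rfl | hj
    · simp only [h, Function.update_self]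
      rw [integrable_indicator_iff measurableSet_Ici, integrableOn_Ici_iff_integrableOn_Ioi]
      exact exp_neg_integrableOn_Ioi 0 hκ
    · simp only [h, Function.update_of_ne hj]
      exact integrable_exp_neg_mul_sq (by positivity)
  refine hint.integrableOn.mono' continuous_tailKernel.aestronglyMeasurable ?_
  filter_upwards [ae_restrict_mem (measurableSet_le measurable_const (measurable_pi_apply i))]
    with z hz
  have hrest : ∀ j ∈ Finset.univ.erase i,
      h j (z j) = Real.exp (-(c / 2) * Function.update z i 0 j ^ 2) := by
    intro j hj
    simp only [h, Function.update_of_ne (Finset.ne_of_mem_erase hj)]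
  have hdot : Function.update z i 0 ⬝ᵥ Function.update z i 0 =
      ∑ j ∈ Finset.univ.erase i, Function.update z i 0 j ^ 2 := by
    rw [dotProduct, ← Finset.add_sum_erase _ _ (Finset.mem_univ i)]
    simp [sq]
  rw [Real.norm_of_nonneg (tailKernel_pos z).le, ← Finset.mul_prod_erase _ _ (Finset.mem_univ i),
    Finset.prod_congr rfl hrest, ← Real.exp_sum, ← Finset.mul_sum, ← hdot]
  simp only [h, Function.update_self, Set.indicator_of_mem (Set.mem_Ici.2 hz), ← Real.exp_add]
  unfold tailKernel
  gcongr
  linarith [hle (Function.update z i 0)]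

lemma setIntegral_tailKernel_zero_pos (hQ : Q.PosDef) (hκ : 0 < κ) :
    0 < ∫ z in {z | 0 ≤ z i}, tailKernel Q i κ 0 z := by
  have hopen : IsOpen {z : ι → ℝ | 0 < z i} := isOpen_lt continuous_const (continuous_apply i)
  have hsupp : Function.support (tailKernel Q i κ 0) = Set.univ :=
    Set.eq_univ_of_forall fun z => (tailKernel_pos z).ne'
  rw [setIntegral_pos_iff_support_of_nonneg_ae
    (Eventually.of_forall fun z => (tailKernel_pos z).le) (integrableOn_tailKernel_zero hQ hκ),
    hsupp, Set.univ_inter]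
  exact (hopen.measure_pos volume ⟨1, zero_lt_one' ℝ⟩).trans_le
    (measure_mono fun z hz => (show 0 < z i from hz).le)

lemma tendsto_setIntegral_tailKernel (hQ : Q.PosDef) (hκ : 0 < κ) {α : Type*} {l : Filter α}
    [l.IsCountablyGenerated] {D : α → Set (ι → ℝ)} {d : α → ℝ} (hd : Tendsto d l (𝓝 0))
    (hd0 : ∀ a, 0 ≤ d a) (hmeas : ∀ a, MeasurableSet (D a))
    (hsub : ∀ᶠ a in l, D a ⊆ {z | 0 ≤ z i}) (hmem : ∀ z, 0 < z i → ∀ᶠ a in l, z ∈ D a) :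
    Tendsto (fun a => ∫ z in D a, tailKernel Q i κ (d a) z) l
      (𝓝 (∫ z in {z | 0 ≤ z i}, tailKernel Q i κ 0 z)) := by
  have hH : MeasurableSet {z : ι → ℝ | 0 ≤ z i} :=
    measurableSet_le measurable_const (measurable_pi_apply i)
  simp_rw [← integral_indicator hH, ← integral_indicator (hmeas _)]
  refine tendsto_integral_filter_of_dominated_convergence _
    (Eventually.of_forall fun a => (continuous_tailKernel.measurable.indicator
      (hmeas a)).aestronglyMeasurable) ?_
    ((integrable_indicator_iff hH).2 (integrableOn_tailKernel_zero hQ hκ)) ?_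
  · filter_upwards [hsub] with a ha
    refine Eventually.of_forall fun z => ?_
    rw [Real.norm_of_nonneg (Set.indicator_nonneg (fun z _ => (tailKernel_pos z).le) z)]
    exact (Set.indicator_le_indicator_of_subset ha (fun z => (tailKernel_pos z).le) z).trans
      (Set.indicator_le_indicator (tailKernel_le_tailKernel_zero (hd0 a) z))
  · have hne : ∀ᵐ z : ι → ℝ, z i ≠ 0 := Measure.ae_eval_ne _ i 0
    filter_upwards [hne] with z hz
    rcases hz.lt_or_gt with hneg | hpos
    · rw [Set.indicator_of_notMem (show z ∉ {z | 0 ≤ z i} from hneg.not_ge)]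
      refine tendsto_const_nhds.congr' ?_
      filter_upwards [hsub] with a ha
      rw [Set.indicator_of_notMem fun hza => hneg.not_ge (ha hza)]
    · rw [Set.indicator_of_mem (show z ∈ {z | 0 ≤ z i} from hpos.le)]
      refine (tendsto_tailKernel_zero hd z).congr' ?_
      filter_upwards [hmem z hpos] with a ha
      rw [Set.indicator_of_mem ha]

end TailKernel

lemma exp_apply_le_sum_exp {ι : Type*} [Fintype ι] (y : ι → ℝ) (i : ι) :
    Real.exp (y i) ≤ ∑ j, Real.exp (y j) :=
  Finset.single_le_sum (f := fun j => Real.exp (y j)) (fun _ _ => (Real.exp_pos _).le)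
    (Finset.mem_univ i)

section Regression

variable {ι : Type*} {S : Matrix ι ι ℝ} {i : ι}

/-- The coefficients of the linear regression of the coordinates of a random vector with covariance
matrix `S` on its coordinate `i`. -/
noncomputable def regressionVec (S : Matrix ι ι ℝ) (i : ι) : ι → ℝ :=
  fun j => S j i / S i i

lemma regressionVec_self (hS : S i i ≠ 0) : regressionVec S i i = 1 :=
  div_self hS

lemma one_lt_regressionVec_of_sqrt_lt (hS : S.PosDef) {j : ι}
    (h : √(S i i) < S i j / √(S i i * S j j) * √(S j j)) : 1 < regressionVec S i j := by
  have hi : 0 < S i i := hS.diag_pos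
  have hj : 0 < S j j := hS.diag_pos
  have hsymm : S i j = S j i := by simpa using (hS.isHermitian.apply i j).symm
  rw [Real.sqrt_mul hi.le, ← div_div, div_mul_cancel₀ _ (Real.sqrt_pos.2 hj).ne',
    lt_div_iff₀ (Real.sqrt_pos.2 hi), Real.mul_self_sqrt hi.le, hsymm] at h
  exact (one_lt_div hi).2 h

variable [DecidableEq ι]

/-- The vector whose coordinate `i` lies `e + z i / e` below its mean `m i` and whose other
coordinates have regression residuals `z j` on it. At depth `e` below the mean, a Gaussian
coordinate conditioned to lie deeper fluctuates on the scale `1 / e`. -/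
noncomputable def regressionMap (m : ι → ℝ) (S : Matrix ι ι ℝ) (i : ι) (e : ℝ) (z : ι → ℝ) :
    ι → ℝ :=
  m - (e + e⁻¹ * z i) • regressionVec S i + Function.update z i 0

variable {m : ι → ℝ} {e : ℝ}

lemma continuous_regressionMap : Continuous (regressionMap m S i e) := by
  unfold regressionMap
  fun_prop

lemma regressionMap_self (hS : S i i ≠ 0) (z : ι → ℝ) :
    regressionMap m S i e z i = m i - e - e⁻¹ * z i := by
  simp [regressionMap, regressionVec_self hS, sub_sub]

lemma regressionMap_of_ne {j : ι} (hj : j ≠ i) (z : ι → ℝ) :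
    regressionMap m S i e z j = m j - (e + e⁻¹ * z i) * regressionVec S i j + z j := by
  simp [regressionMap, hj]

lemma tendsto_mul_exp_regressionMap_self (hS : S i i ≠ 0) (z : ι → ℝ) :
    Tendsto (fun e => e * (Real.exp (regressionMap m S i e z i - (m i - e)) - 1)) atTop
      (𝓝 (-z i)) := by
  simpa [regressionMap_self hS] using
    (Real.hasDerivAt_exp 0).hasFDerivAt.lim_real (-z i)

lemma tendsto_mul_exp_regressionMap_of_ne {j : ι} (hj : j ≠ i) (hβ : 1 < regressionVec S i j)
    (z : ι → ℝ) :
    Tendsto (fun e => e * Real.exp (regressionMap m S i e z j - (m i - e))) atTop (𝓝 0) := by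
  have hdecay : Tendsto (fun e => e * Real.exp (-(regressionVec S i j - 1) * e)) atTop (𝓝 0) := by
    simpa using tendsto_rpow_mul_exp_neg_mul_atTop_nhds_zero 1 _ (sub_pos.2 hβ)
  have hbdd : Tendsto (fun e : ℝ => Real.exp (m j - m i + z j - e⁻¹ * (z i * regressionVec S i j)))
      atTop (𝓝 (Real.exp (m j - m i + z j))) := by
    simpa using ((tendsto_inv_atTop_zero.mul_const (z i * regressionVec S i j)).const_sub
      (m j - m i + z j)).rexp
  rw [← zero_mul (Real.exp (m j - m i + z j))]
  refine (hdecay.mul hbdd).congr fun e => ?_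
  rw [mul_assoc, ← Real.exp_add, regressionMap_of_ne hj]
  ring_nf

variable [Fintype ι]

lemma inv_mulVec_regressionVec (hS : IsUnit S.det) :
    S⁻¹ *ᵥ regressionVec S i = Pi.single i (S i i)⁻¹ := by
  have hcol : regressionVec S i = S *ᵥ Pi.single i (S i i)⁻¹ := by
    ext j
    simp [regressionVec, div_eq_mul_inv]
  rw [hcol, mulVec_mulVec, nonsing_inv_mul _ hS, one_mulVec]

lemma dotProduct_inv_mulVec_smul_regressionVec_add (hS : S.PosDef) (τ : ℝ) {v : ι → ℝ}
    (hv : v i = 0) :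
    (τ • regressionVec S i + v) ⬝ᵥ S⁻¹ *ᵥ (τ • regressionVec S i + v) =
      τ ^ 2 / S i i + v ⬝ᵥ S⁻¹ *ᵥ v := by
  have hβ : S⁻¹ *ᵥ regressionVec S i = Pi.single i (S i i)⁻¹ :=
    inv_mulVec_regressionVec ((isUnit_iff_isUnit_det S).1 hS.isUnit)
  have hcross : regressionVec S i ⬝ᵥ S⁻¹ *ᵥ v = v ⬝ᵥ S⁻¹ *ᵥ regressionVec S i := by
    have hT : (S⁻¹)ᵀ = S⁻¹ := by simpa using hS.inv.isHermitian.eq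
    rw [dotProduct_mulVec, ← mulVec_transpose, hT, dotProduct_comm]
  simp only [mulVec_add, mulVec_smul, dotProduct_add, add_dotProduct, smul_dotProduct,
    dotProduct_smul, hcross, hβ, dotProduct_single, Pi.add_apply, Pi.smul_apply, hv,
    regressionVec_self hS.diag_pos.ne', smul_eq_mul]
  ring

lemma setIntegral_eq_inv_mul_setIntegral_regressionMap (hS : S i i ≠ 0) (he : 0 < e)
    (F : (ι → ℝ) → ℝ) (D : Set (ι → ℝ)) :
    ∫ y in D, F y = e⁻¹ * ∫ z in regressionMap m S i e ⁻¹' D, F (regressionMap m S i e z) := by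
  have hdet : ((1 : Matrix ι ι ℝ).updateCol i (-(e⁻¹ • regressionVec S i))).det = -e⁻¹ := by
    simp [det_one_updateCol, regressionVec_self hS]
  have hmap : regressionMap m S i e = fun z => (m - e • regressionVec S i) +
      (1 : Matrix ι ι ℝ).updateCol i (-(e⁻¹ • regressionVec S i)) *ᵥ z := by
    ext1 z
    rw [one_updateCol_mulVec, regressionMap]
    module
  rw [hmap, setIntegral_eq_abs_det_smul_setIntegral_add_mulVec
    (hdet ▸ neg_ne_zero.2 (inv_pos.2 he).ne') (m - e • regressionVec S i) F D, hdet, abs_neg,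
    abs_of_pos (inv_pos.2 he), smul_eq_mul]

lemma eventually_sum_exp_regressionMap_le (hS : S i i ≠ 0)
    (hβ : ∀ j, j ≠ i → 1 < regressionVec S i j) {z : ι → ℝ} (hz : 0 < z i) :
    ∀ᶠ e in atTop, ∑ j, Real.exp (regressionMap m S i e z j) ≤ Real.exp (m i - e) := by
  have hlim : Tendsto
      (fun e => e * (∑ j, Real.exp (regressionMap m S i e z j - (m i - e)) - 1)) atTop
      (𝓝 (-z i)) := by
    have hsum := (tendsto_mul_exp_regressionMap_self hS z (m := m)).add
      (tendsto_finsetSum (Finset.univ.erase i) fun j hj =>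
        tendsto_mul_exp_regressionMap_of_ne (m := m) (Finset.ne_of_mem_erase hj)
          (hβ j (Finset.ne_of_mem_erase hj)) z)
    rw [Finset.sum_const_zero, add_zero] at hsum
    refine hsum.congr fun e => ?_
    rw [← Finset.add_sum_erase _ _ (Finset.mem_univ i), ← Finset.mul_sum]
    ring
  filter_upwards [hlim.eventually_lt_const (neg_neg_iff_pos.2 hz), eventually_gt_atTop 0]
    with e hneg he
  have hle : ∑ j, Real.exp (regressionMap m S i e z j - (m i - e)) ≤ 1 :=
    sub_nonpos.1 (neg_of_mul_neg_right hneg he.le).le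
  simp_rw [Real.exp_sub _ (m i - e), ← Finset.sum_div] at hle
  exact (div_le_one (Real.exp_pos _)).1 hle

end Regression

section Correlation

variable {α : Type*} {l : Filter α}

lemma tendsto_div_sqrt_zero {e w p b : α → ℝ} {c d : ℝ} (he : Tendsto e l atTop)
    (hw : ∀ a, 0 < w a) (hp : Tendsto (fun a => e a * w a * p a) l (𝓝 c)) (hd : 0 < d)
    (hb : Tendsto (fun a => e a * w a ^ 2 * b a) l (𝓝 d)) :
    Tendsto (fun a => p a / √(b a)) l (𝓝 0) := by
  have hroot : Tendsto (fun a => (√(e a))⁻¹) l (𝓝 0) :=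
    tendsto_inv_atTop_zero.comp (tendsto_sqrt_atTop.comp he)
  have hlim := (hp.div hb.sqrt (Real.sqrt_pos.2 hd).ne').mul hroot
  rw [mul_zero] at hlim
  refine hlim.congr' ?_
  filter_upwards [he.eventually_gt_atTop 0] with a ha
  have hwa := hw a
  have hsplit : √(e a * w a ^ 2 * b a) = √(e a) * w a * √(b a) := by
    rw [Real.sqrt_mul (by positivity), Real.sqrt_mul ha.le, Real.sqrt_sq hwa.le]
  have hroot0 : √(e a) ≠ 0 := (Real.sqrt_pos.2 ha).ne'
  rw [Pi.div_apply, hsplit]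
  field_simp
  rw [Real.sq_sqrt ha.le, mul_comm]

lemma tendsto_correlation_one {a b p q : α → ℝ} (hb : ∀ᶠ x in l, 0 < b x)
    (hab : Tendsto (fun x => a x / b x) l (𝓝 1)) (hp : Tendsto (fun x => p x / √(b x)) l (𝓝 0))
    (hq : Tendsto (fun x => q x / √(b x)) l (𝓝 0)) :
    Tendsto (fun x => (a x - p x * q x) / √((a x - p x ^ 2) * (b x - q x ^ 2))) l (𝓝 1) := by
  have hcov : Tendsto (fun x => a x / b x - p x / √(b x) * (q x / √(b x))) l (𝓝 1) := by
    simpa using hab.sub (hp.mul hq)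
  have hvar : Tendsto (fun x => (a x / b x - (p x / √(b x)) ^ 2) * (1 - (q x / √(b x)) ^ 2)) l
      (𝓝 1) := by
    simpa using (hab.sub (hp.pow 2)).mul ((hq.pow 2).const_sub 1)
  have hlim := hcov.div hvar.sqrt (by simp)
  rw [Real.sqrt_one, div_one] at hlim
  refine hlim.congr' ?_
  filter_upwards [hb] with x hx
  have hcovx : a x / b x - p x / √(b x) * (q x / √(b x)) = (a x - p x * q x) / b x := by
    rw [div_mul_div_comm, Real.mul_self_sqrt hx.le, sub_div]
  have hvarx : (a x / b x - (p x / √(b x)) ^ 2) * (1 - (q x / √(b x)) ^ 2) =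
      (a x - p x ^ 2) * (b x - q x ^ 2) / b x ^ 2 := by
    rw [div_pow, div_pow, Real.sq_sqrt hx.le]
    field_simp
  rw [Pi.div_apply, hcovx, hvarx, Real.sqrt_div' _ (sq_nonneg _), Real.sqrt_sq hx.le,
    div_div_div_cancel_right₀ hx.ne']

end Correlation

section ImportanceSampling

variable {X : Type*} [MeasurableSpace X] {D E : Set X} {μ : Measure X}

/-- The correlation coefficient of `U` and `V` under the probability measure with density `g` with
respect to `μ`. -/
noncomputable def densityCorrelation (g U V : X → ℝ) (μ : Measure X) : ℝ :=
  ((∫ x, U x * V x * g x ∂μ) - (∫ x, U x * g x ∂μ) * ∫ x, V x * g x ∂μ) /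
    √(((∫ x, U x ^ 2 * g x ∂μ) - (∫ x, U x * g x ∂μ) ^ 2) *
      ((∫ x, V x ^ 2 * g x ∂μ) - (∫ x, V x * g x ∂μ) ^ 2))

/-- The importance sampling estimator of the probability of `D` under the density `f`, for samples
drawn from the density `g`: the indicator of `D` weighted by the likelihood ratio. -/
noncomputable def importanceEstimator (D : Set X) (f g : X → ℝ) (x : X) : ℝ :=
  D.indicator (fun _ => 1) x * (f x / g x)

lemma integral_importanceEstimator_mul (hD : MeasurableSet D) (f : X → ℝ) {g : X → ℝ}
    (hg : ∀ x, g x ≠ 0) :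
    ∫ x, importanceEstimator D f g x * g x ∂μ = ∫ x in D, f x ∂μ := by
  rw [← integral_indicator hD]
  congr 1 with x
  by_cases hx : x ∈ D <;> simp [importanceEstimator, hx, hg x]

lemma integral_importanceEstimator_mul_importanceEstimator_mul (hD : MeasurableSet D)
    (hDE : D ⊆ E) (f g : X → ℝ) :
    ∫ x, importanceEstimator D f g x * importanceEstimator E f g x * g x ∂μ =
      ∫ x in D, f x ^ 2 / g x ∂μ := by
  rw [← integral_indicator hD]
  congr 1 with x
  by_cases hx : x ∈ D
  · rcases eq_or_ne (g x) 0 with hg | hg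
    · simp [hg, hx]
    · simp only [importanceEstimator, Set.indicator_of_mem hx, Set.indicator_of_mem (hDE hx)]
      field_simp
  · simp [importanceEstimator, hx]

lemma densityCorrelation_importanceEstimator (hD : MeasurableSet D) (hE : MeasurableSet E)
    (hDE : D ⊆ E) (f : X → ℝ) {g : X → ℝ} (hg : ∀ x, g x ≠ 0) :
    densityCorrelation g (importanceEstimator D f g) (importanceEstimator E f g) μ =
      ((∫ x in D, f x ^ 2 / g x ∂μ) - (∫ x in D, f x ∂μ) * ∫ x in E, f x ∂μ) /
        √(((∫ x in D, f x ^ 2 / g x ∂μ) - (∫ x in D, f x ∂μ) ^ 2) *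
          ((∫ x in E, f x ^ 2 / g x ∂μ) - (∫ x in E, f x ∂μ) ^ 2)) := by
  simp only [densityCorrelation, sq (importanceEstimator _ _ _ _),
    integral_importanceEstimator_mul hD f hg, integral_importanceEstimator_mul hE f hg,
    integral_importanceEstimator_mul_importanceEstimator_mul hD hDE,
    integral_importanceEstimator_mul_importanceEstimator_mul hD subset_rfl,
    integral_importanceEstimator_mul_importanceEstimator_mul hE subset_rfl]

end ImportanceSampling

section MvnPdf

variable {n : ℕ} {m : Fin n → ℝ} {S : Matrix (Fin n) (Fin n) ℝ} {i : Fin n}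

lemma mvnPdf_pos (hS : 0 < S.det) (y : Fin n → ℝ) : 0 < mvnPdf m S y :=
  div_pos (Real.exp_pos _) (Real.sqrt_pos.2 (by positivity))

lemma mvnPdf_sq_div_mvnPdf_sub (v y : Fin n → ℝ) :
    mvnPdf m S y ^ 2 / mvnPdf (m - v) S y =
      Real.exp (v ⬝ᵥ S⁻¹ *ᵥ v) * mvnPdf (m + v) S y := by
  have hsub : y - (m - v) = (y - m) + v := by abel
  have hadd : y - (m + v) = (y - m) - v := by abel
  have hexp : ∀ u : Fin n → ℝ, Real.exp (-(1 / 2) * (u ⬝ᵥ S⁻¹ *ᵥ u)) ^ 2 =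
      Real.exp (v ⬝ᵥ S⁻¹ *ᵥ v) * Real.exp (-(1 / 2) * ((u - v) ⬝ᵥ S⁻¹ *ᵥ (u - v))) *
        Real.exp (-(1 / 2) * ((u + v) ⬝ᵥ S⁻¹ *ᵥ (u + v))) := by
    intro u
    rw [← Real.exp_nat_mul, ← Real.exp_add, ← Real.exp_add]
    simp only [mulVec_add, mulVec_sub, dotProduct_add, dotProduct_sub, add_dotProduct,
      sub_dotProduct]
    congr 1
    push_cast
    ring
  simp only [mvnPdf, hsub, hadd, div_pow, hexp]
  field_simp

lemma mvnPdf_regressionMap (hS : S.PosDef) {e : ℝ} (he : e ≠ 0) (t : ℝ) (z : Fin n → ℝ) :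
    mvnPdf (m + (t * e) • regressionVec S i) S (regressionMap m S i e z) =
      Real.exp (-(((1 + t) * e) ^ 2 / (2 * S i i))) / √((2 * π) ^ n * S.det) *
        tailKernel S⁻¹ i ((1 + t) / S i i) (e⁻¹ ^ 2 / (2 * S i i)) z := by
  have hi : S i i ≠ 0 := hS.diag_pos.ne'
  have hsub : regressionMap m S i e z - (m + (t * e) • regressionVec S i) =
      (-((1 + t) * e + e⁻¹ * z i)) • regressionVec S i + Function.update z i 0 := by
    unfold regressionMap
    module
  rw [mvnPdf, hsub, dotProduct_inv_mulVec_smul_regressionVec_add hS _ (Function.update_self ..),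
    tailKernel, div_mul_eq_mul_div, ← Real.exp_add]
  congr 2
  field_simp
  ring

lemma setIntegral_mvnPdf_eq_setIntegral_tailKernel (hS : S.PosDef) {e : ℝ} (he : 0 < e) (t : ℝ)
    (D : Set (Fin n → ℝ)) :
    ∫ y in D, mvnPdf (m + (t * e) • regressionVec S i) S y =
      e⁻¹ * (Real.exp (-(((1 + t) * e) ^ 2 / (2 * S i i))) / √((2 * π) ^ n * S.det) *
        ∫ z in regressionMap m S i e ⁻¹' D,
          tailKernel S⁻¹ i ((1 + t) / S i i) (e⁻¹ ^ 2 / (2 * S i i)) z) := by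
  rw [setIntegral_eq_inv_mul_setIntegral_regressionMap hS.diag_pos.ne' he (m := m) (i := i)]
  simp only [mvnPdf_regressionMap hS he.ne']
  rw [integral_const_mul]

/-- A family of sets `D e` inside the half spaces at depth `e` below the mean in the coordinate `i`
which, in the coordinates of `regressionMap`, exhausts the half space `0 < z i` as `e → ∞`. -/
structure FillsTail (m : Fin n → ℝ) (S : Matrix (Fin n) (Fin n) ℝ) (i : Fin n)
    (D : ℝ → Set (Fin n → ℝ)) : Prop where
  measurableSet : ∀ e, MeasurableSet (D e)
  eval_le : ∀ e, ∀ y ∈ D e, y i ≤ m i - e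
  eventually_mem : ∀ z, 0 < z i → ∀ᶠ e in atTop, regressionMap m S i e z ∈ D e

lemma fillsTail_exp_le (hS : S i i ≠ 0) :
    FillsTail m S i fun e => {y | Real.exp (y i) ≤ Real.exp (m i - e)} where
  measurableSet e := measurableSet_le (by fun_prop) measurable_const
  eval_le e y hy := Real.exp_le_exp.1 hy
  eventually_mem z hz := by
    filter_upwards [eventually_gt_atTop 0] with e he
    refine Real.exp_le_exp.2 ?_
    rw [regressionMap_self hS, sub_le_self_iff]
    positivity

lemma fillsTail_sum_exp_le (hS : S i i ≠ 0) (hβ : ∀ j, j ≠ i → 1 < regressionVec S i j) :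
    FillsTail m S i fun e => {y | ∑ j, Real.exp (y j) ≤ Real.exp (m i - e)} where
  measurableSet e := measurableSet_le (by fun_prop) measurable_const
  eval_le e y hy := Real.exp_le_exp.1 ((exp_apply_le_sum_exp y i).trans hy)
  eventually_mem z hz := eventually_sum_exp_regressionMap_le hS hβ hz

/-- The constant in the Laplace asymptotics of the mass of a Gaussian tail at depth `e`, when the
mean is raised by `t * e` in the coordinate `i`. -/
noncomputable def tailConstant (S : Matrix (Fin n) (Fin n) ℝ) (i : Fin n) (t : ℝ) : ℝ :=
  (√((2 * π) ^ n * S.det))⁻¹ * ∫ z in {z | 0 ≤ z i}, tailKernel S⁻¹ i ((1 + t) / S i i) 0 z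

lemma tailConstant_pos (hS : S.PosDef) {t : ℝ} (ht : -1 < t) : 0 < tailConstant S i t := by
  have hdet : 0 < S.det := hS.det_pos
  have hint : 0 < ∫ z in {z | 0 ≤ z i}, tailKernel S⁻¹ i ((1 + t) / S i i) 0 z :=
    setIntegral_tailKernel_zero_pos hS.inv (div_pos (by linarith) hS.diag_pos)
  unfold tailConstant
  positivity

namespace FillsTail

variable {D E : ℝ → Set (Fin n → ℝ)}

lemma preimage_regressionMap_subset (hD : FillsTail m S i D) (hS : S i i ≠ 0) {e : ℝ}
    (he : 0 < e) : regressionMap m S i e ⁻¹' D e ⊆ {z | 0 ≤ z i} := by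
  intro z hz
  have hle := hD.eval_le e _ hz
  rw [regressionMap_self hS, sub_le_self_iff] at hle
  exact nonneg_of_mul_nonneg_right hle (inv_pos.2 he)

lemma tendsto_setIntegral_mvnPdf (hD : FillsTail m S i D) (hS : S.PosDef) {t : ℝ} (ht : -1 < t) :
    Tendsto (fun e => e * Real.exp (((1 + t) * e) ^ 2 / (2 * S i i)) *
      ∫ y in D e, mvnPdf (m + (t * e) • regressionVec S i) S y) atTop
      (𝓝 (tailConstant S i t)) := by
  have hi : 0 < S i i := hS.diag_pos
  have hδ : Tendsto (fun e : ℝ => e⁻¹ ^ 2 / (2 * S i i)) atTop (𝓝 0) := by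
    simpa using (tendsto_inv_atTop_zero.pow 2).div_const (2 * S i i)
  have hker := tendsto_setIntegral_tailKernel hS.inv (div_pos (neg_lt_iff_pos_add'.1 ht) hi) hδ
    (fun e => by positivity) (fun e => continuous_regressionMap.measurable (hD.measurableSet e))
    ((eventually_gt_atTop 0).mono fun e he => hD.preimage_regressionMap_subset hi.ne' he)
    hD.eventually_mem
  refine (hker.const_mul (√((2 * π) ^ n * S.det))⁻¹).congr' ?_
  filter_upwards [eventually_gt_atTop 0] with e he
  rw [setIntegral_mvnPdf_eq_setIntegral_tailKernel hS he, Real.exp_neg]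
  field_simp

lemma tendsto_setIntegral_mvnPdf_sq_div (hD : FillsTail m S i D) (hS : S.PosDef) :
    Tendsto (fun e => e * Real.exp (e ^ 2 / (2 * S i i)) ^ 2 *
      ∫ y in D e, mvnPdf m S y ^ 2 / mvnPdf (m - e • regressionVec S i) S y) atTop
      (𝓝 (tailConstant S i 1)) := by
  refine (hD.tendsto_setIntegral_mvnPdf hS (t := 1) (by norm_num)).congr fun e => ?_
  have hquad : (e • regressionVec S i) ⬝ᵥ S⁻¹ *ᵥ (e • regressionVec S i) = e ^ 2 / S i i := by
    simpa using dotProduct_inv_mulVec_smul_regressionVec_add hS e (v := 0) rfl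
  simp_rw [mvnPdf_sq_div_mvnPdf_sub, hquad, integral_const_mul, one_mul]
  have hexp : Real.exp (((1 + 1) * e) ^ 2 / (2 * S i i)) =
      Real.exp (e ^ 2 / (2 * S i i)) ^ 2 * Real.exp (e ^ 2 / S i i) := by
    rw [← Real.exp_nat_mul, ← Real.exp_add]
    congr 1
    ring
  rw [hexp]
  ring

lemma tendsto_div_sqrt_setIntegral_sq_div (hD : FillsTail m S i D) (hE : FillsTail m S i E)
    (hS : S.PosDef) :
    Tendsto (fun e => (∫ y in D e, mvnPdf m S y) /
      √(∫ y in E e, mvnPdf m S y ^ 2 / mvnPdf (m - e • regressionVec S i) S y)) atTop (𝓝 0) := by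
  have hmean := hD.tendsto_setIntegral_mvnPdf hS neg_one_lt_zero
  simp only [add_zero, one_mul, zero_mul, zero_smul] at hmean
  exact tendsto_div_sqrt_zero tendsto_id (fun _ => Real.exp_pos _) hmean
    (tailConstant_pos hS (by norm_num)) (hE.tendsto_setIntegral_mvnPdf_sq_div hS)

lemma tendsto_setIntegral_sq_div_div (hD : FillsTail m S i D) (hE : FillsTail m S i E)
    (hS : S.PosDef) :
    Tendsto (fun e => (∫ y in D e, mvnPdf m S y ^ 2 / mvnPdf (m - e • regressionVec S i) S y) /
      ∫ y in E e, mvnPdf m S y ^ 2 / mvnPdf (m - e • regressionVec S i) S y) atTop (𝓝 1) := by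
  have hC : tailConstant S i 1 ≠ 0 := (tailConstant_pos hS (by norm_num)).ne'
  have hlim := (hD.tendsto_setIntegral_mvnPdf_sq_div hS).div
    (hE.tendsto_setIntegral_mvnPdf_sq_div hS) hC
  rw [div_self hC] at hlim
  refine hlim.congr' ?_
  filter_upwards [eventually_gt_atTop 0] with e he
  exact mul_div_mul_left _ _ (by positivity)

lemma eventually_setIntegral_sq_div_pos (hD : FillsTail m S i D) (hS : S.PosDef) :
    ∀ᶠ e in atTop, 0 < ∫ y in D e, mvnPdf m S y ^ 2 / mvnPdf (m - e • regressionVec S i) S y := by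
  filter_upwards [(hD.tendsto_setIntegral_mvnPdf_sq_div hS).eventually_const_lt
    (tailConstant_pos hS (by norm_num)), eventually_gt_atTop 0] with e hpos he
  exact pos_of_mul_pos_right hpos (by positivity)

theorem tendsto_densityCorrelation_importanceEstimator (hD : FillsTail m S i D)
    (hE : FillsTail m S i E) (hDE : ∀ e, D e ⊆ E e) (hS : S.PosDef) :
    Tendsto (fun e => densityCorrelation (mvnPdf (m - e • regressionVec S i) S)
      (importanceEstimator (D e) (mvnPdf m S) (mvnPdf (m - e • regressionVec S i) S))
      (importanceEstimator (E e) (mvnPdf m S) (mvnPdf (m - e • regressionVec S i) S)) volume) atTop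
      (𝓝 1) := by
  simp_rw [densityCorrelation_importanceEstimator (hD.measurableSet _) (hE.measurableSet _) (hDE _)
    _ fun y => (mvnPdf_pos hS.det_pos y).ne']
  exact tendsto_correlation_one (hE.eventually_setIntegral_sq_div_pos hS)
    (hD.tendsto_setIntegral_sq_div_div hE hS) (hD.tendsto_div_sqrt_setIntegral_sq_div hE hS)
    (hE.tendsto_div_sqrt_setIntegral_sq_div hE hS)

end FillsTail

end MvnPdf

theorem stmt16 {n : ℕ} (m : Fin (n + 1) → ℝ) (S : Matrix (Fin (n + 1)) (Fin (n + 1)) ℝ)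
    (hS : S.PosDef)
    (hA : ∀ j : Fin (n + 1), j ≠ 0 →
      Real.sqrt (S 0 0) < S 0 j / Real.sqrt (S 0 0 * S j j) * Real.sqrt (S j j)) :
    let Λ : ℝ → Fin (n + 1) → ℝ := fun γ k =>
      if k = 0 then Real.log γ - m 0 else S k 0 / S 0 0 * (Real.log γ - m 0)
    let g : ℝ → (Fin (n + 1) → ℝ) → ℝ := fun γ y => mvnPdf (m + Λ γ) S y
    let L : ℝ → (Fin (n + 1) → ℝ) → ℝ := fun γ y => mvnPdf m S y / g γ y
    let T : ℝ → (Fin (n + 1) → ℝ) → ℝ := fun γ y =>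
      Set.indicator {y : Fin (n + 1) → ℝ | ∑ i, Real.exp (y i) ≤ γ} (fun _ => (1 : ℝ)) y *
        L γ y
    let Z : ℝ → (Fin (n + 1) → ℝ) → ℝ := fun γ y =>
      Set.indicator {y : Fin (n + 1) → ℝ | Real.exp (y 0) ≤ γ} (fun _ => (1 : ℝ)) y * L γ y
    let α : ℝ → ℝ := fun γ => ∫ y : Fin (n + 1) → ℝ, T γ y * g γ y
    let P : ℝ → ℝ := fun γ => ∫ y : Fin (n + 1) → ℝ, Z γ y * g γ y
    let varT : ℝ → ℝ := fun γ => (∫ y : Fin (n + 1) → ℝ, (T γ y) ^ 2 * g γ y) - α γ ^ 2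
    let varZ : ℝ → ℝ := fun γ => (∫ y : Fin (n + 1) → ℝ, (Z γ y) ^ 2 * g γ y) - P γ ^ 2
    let cov : ℝ → ℝ := fun γ =>
      (∫ y : Fin (n + 1) → ℝ, T γ y * Z γ y * g γ y) - α γ * P γ
    Filter.Tendsto (fun γ : ℝ => cov γ / Real.sqrt (varT γ * varZ γ))
      (nhdsWithin 0 (Set.Ioi 0)) (nhds 1) := by
  intro Λ g L T Z α P varT varZ cov
  have hS0 : S 0 0 ≠ 0 := hS.diag_pos.ne'
  have hdepth : Tendsto (fun γ => m 0 - Real.log γ) (𝓝[>] 0) atTop :=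
    tendsto_atTop_add_const_left _ _ (tendsto_neg_atBot_atTop.comp Real.tendsto_log_nhdsGT_zero)
  have hshift : ∀ γ, m + Λ γ = m - (m 0 - Real.log γ) • regressionVec S 0 := by
    intro γ
    ext j
    rcases eq_or_ne j 0 with rfl | hj
    · simp [Λ, regressionVec_self hS0]
    · simp only [Λ, regressionVec, if_neg hj, Pi.add_apply, Pi.sub_apply, Pi.smul_apply,
        smul_eq_mul]
      ring
  have hsum := fillsTail_sum_exp_le (m := m) hS0 fun j hj =>
    one_lt_regressionVec_of_sqrt_lt hS (hA j hj)
  have hlim := (hsum.tendsto_densityCorrelation_importanceEstimator (fillsTail_exp_le hS0)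
    (fun _ y hy => (exp_apply_le_sum_exp y 0).trans hy) hS).comp hdepth
  refine hlim.congr' ?_
  filter_upwards [self_mem_nhdsWithin] with γ hγ
  simp only [Function.comp_apply, sub_sub_cancel, Real.exp_log hγ, ← hshift]
  rfl
end
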